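/- Let (A,Λ) be an associative form ring with 1, n ≥ 3, and let (I,Γ), (J,Δ) be form ideals of (A,Λ). Let i ∈ Ω, k ∈ Ω with k ≠ ±i, a ∈ I, and suppose b ∈ λ^{(ε(i)−1)/2}Δ has the form b = b' − λ^{ε(i)}·b̄' for some b' ∈ J. Then [T_{i,−i}(a − λ^{ε(−i)}·ā), T_{−i,i}(b)] ≡ [T_{i,k}(a), T_{k,i}(b')]·[T_{i,k}(a), T_{k,i}(−λ^{ε(i)}·b̄')] modulo EU(2n,(I,Γ)∘(J,Δ)). Here x ≡ y modulo a subgroup H means xy⁻¹ ∈ H. -/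

import Mathlib

open Matrix
open scoped commutatorElement

/-- Bak's form ring data on a ring `A`: an involution `bar`, a central symmetry
`λ` with `λ λ̄ = 1`, and a form parameter `Λ`. -/
structure FormRingData (A : Type*) [Ring A] where
  bar : A →+ A
  bar_mul : ∀ a b : A, bar (a * b) = bar b * bar a
  bar_bar : ∀ a : A, bar (bar a) = a
  lam : A
  lam_comm : ∀ a : A, lam * a = a * lam
  lam_bar : lam * bar lam = 1
  Lambda : AddSubgroup A
  lambdaMin_mem : ∀ c : A, c - lam * bar c ∈ Lambda
  lambdaMax_mem : ∀ x ∈ Lambda, x = -(lam * bar x)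
  lambda_conj : ∀ (c : A), ∀ x ∈ Lambda, c * x * bar c ∈ Lambda

namespace FormRingData

variable {A : Type*} [Ring A]

/-- Integral powers of the symmetry `λ`; negative powers use `λ̄ = λ⁻¹`. -/
def lpow (D : FormRingData A) (k : ℤ) : A :=
  if 0 ≤ k then D.lam ^ k.toNat else (D.bar D.lam) ^ (-k).toNat

end FormRingData

/-- The index set `Ω = {1,…,n,−n,…,−1}`, coded as `Fin n × Bool`
(second component `true` = positive index). -/
abbrev Idx (n : ℕ) := Fin n × Bool

namespace Idx

/-- The involution `i ↦ −i` on indices. -/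
def neg {n : ℕ} (i : Idx n) : Idx n := (i.1, !i.2)

/-- The sign `ε(i) ∈ {±1}`. -/
def eps {n : ℕ} (i : Idx n) : ℤ := if i.2 then 1 else -1

theorem neg_ne {n : ℕ} (i : Idx n) : neg i ≠ i := by
  simp [neg, Prod.ext_iff]

theorem neg_injective {n : ℕ} : Function.Injective (neg (n := n)) := by
  intro i j h
  simp only [neg, Prod.mk.injEq] at h
  refine Prod.ext h.1 ?_
  have h2 := h.2
  cases hi : i.2 <;> cases hj : j.2 <;> simp_all

theorem neg_neg {n : ℕ} (i : Idx n) : neg (neg i) = i := by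
  simp [neg]

end Idx

/-- `GL(2n, A)`, realised as the units of the `Ω × Ω` matrix ring over `A`. -/
abbrev GLn (A : Type*) [Ring A] (n : ℕ) := (Matrix (Idx n) (Idx n) A)ˣ

section aux

theorem one_add_mul_one_sub {R : Type*} [Ring R] {X : R} (h : X * X = 0) :
    (1 + X) * (1 - X) = 1 := by
  have hh : (1 + X) * (1 - X) = 1 - X * X := by noncomm_ring
  rw [hh, h, sub_zero]

theorem one_sub_mul_one_add {R : Type*} [Ring R] {X : R} (h : X * X = 0) :
    (1 - X) * (1 + X) = 1 := by
  have hh : (1 - X) * (1 + X) = 1 - X * X := by noncomm_ring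
  rw [hh, h, sub_zero]

theorem stdBasisMatrix_neg' {A : Type*} [Ring A] {n : ℕ} (i j : Idx n) (c : A) :
    single i j (-c) = -single i j c := by
  refine eq_neg_of_add_eq_zero_left ?_
  rw [← Matrix.single_add]
  simp

end aux

namespace FormRingData

variable {A : Type*} [Ring A] {n : ℕ}

/-- The off-diagonal part of a short root element. -/
def Xmat (D : FormRingData A) (i j : Idx n) (c : A) : Matrix (Idx n) (Idx n) A :=
  single i j c -
    single (Idx.neg j) (Idx.neg i) (D.lpow ((Idx.eps j - Idx.eps i) / 2) * D.bar c)

theorem Xmat_mul (D : FormRingData A) {i j : Idx n} (hij : i ≠ j) (c c' : A) :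
    D.Xmat i j c * D.Xmat i j c' = 0 := by
  unfold Xmat
  rw [sub_mul, mul_sub, mul_sub,
    Matrix.single_mul_single_of_ne _ _ _ _ (Ne.symm hij),
    Matrix.single_mul_single_of_ne _ _ _ _ (Ne.symm (Idx.neg_ne j)),
    Matrix.single_mul_single_of_ne _ _ _ _ (Idx.neg_ne i),
    Matrix.single_mul_single_of_ne _ _ _ _ (fun h => hij (Idx.neg_injective h))]
  simp

theorem Xmat_neg (D : FormRingData A) (i j : Idx n) (c : A) :
    D.Xmat i j (-c) = -D.Xmat i j c := by
  unfold Xmat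
  rw [map_neg, mul_neg, stdBasisMatrix_neg', stdBasisMatrix_neg']
  abel

/-- The elementary short root unipotent `T_{ij}(c)`, for `i ≠ ±j`
(with junk value `1` when `i = j`). -/
def TS (D : FormRingData A) (i j : Idx n) (c : A) : GLn A n :=
  if h : i = j then 1 else
    { val := 1 + D.Xmat i j c
      inv := 1 + D.Xmat i j (-c)
      val_inv := by
        rw [D.Xmat_neg, ← sub_eq_add_neg]
        exact one_add_mul_one_sub (D.Xmat_mul h c c)
      inv_val := by
        rw [D.Xmat_neg, ← sub_eq_add_neg]
        exact one_sub_mul_one_add (D.Xmat_mul h c c) }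

/-- The elementary long root unipotent `T_{i,−i}(c)`. -/
def TL (D : FormRingData A) (i : Idx n) (c : A) : GLn A n where
  val := 1 + single i (Idx.neg i) c
  inv := 1 + single i (Idx.neg i) (-c)
  val_inv := by
    rw [stdBasisMatrix_neg', ← sub_eq_add_neg]
    exact one_add_mul_one_sub (Matrix.single_mul_single_of_ne _ _ _ _ (Idx.neg_ne i) _)
  inv_val := by
    rw [stdBasisMatrix_neg', ← sub_eq_add_neg]
    exact one_sub_mul_one_add (Matrix.single_mul_single_of_ne _ _ _ _ (Idx.neg_ne i) _)

/-- The elementary unitary transvection `T_{ij}(c)` (long or short root type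
according to whether `j = −i`). -/
def T (D : FormRingData A) (i j : Idx n) (c : A) : GLn A n :=
  if j = Idx.neg i then D.TL i c else D.TS i j c

/-- The elementary commutator `Y_{ij}(a,b) = [T_{ij}(a), T_{ji}(b)]`. -/
def Y (D : FormRingData A) (i j : Idx n) (a b : A) : GLn A n :=
  ⁅D.T i j a, D.T j i b⁆

/-- The elementary conjugate `Z_{ij}(a,c) = T_{ji}(c) T_{ij}(a) T_{ji}(−c)`. -/
def Z (D : FormRingData A) (i j : Idx n) (a c : A) : GLn A n :=
  D.T j i c * D.T i j a * D.T j i (-c)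

/-- The set of elementary unitary transvections of level `(I,Γ)`. -/
def transvGen (D : FormRingData A) (n : ℕ) (I Γ : AddSubgroup A) : Set (GLn A n) :=
  {x | ∃ i j : Idx n, i ≠ j ∧ i ≠ Idx.neg j ∧ ∃ c ∈ I, x = D.TS i j c} ∪
    {x | ∃ i : Idx n, ∃ g ∈ Γ, x = D.TL i (D.lpow (-(Idx.eps i + 1) / 2) * g)}

/-- The unrelative elementary subgroup `FU(2n, I, Γ)`. -/
def FU (D : FormRingData A) (n : ℕ) (I Γ : AddSubgroup A) : Subgroup (GLn A n) :=
  Subgroup.closure (D.transvGen n I Γ)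

/-- The absolute elementary unitary group `EU(2n, A, Λ)`. -/
def EUmax (D : FormRingData A) (n : ℕ) : Subgroup (GLn A n) :=
  D.FU n ⊤ D.Lambda

/-- The relative elementary subgroup `EU(2n, I, Γ)`: the normal closure of
`FU(2n, I, Γ)` in `EU(2n, A, Λ)`. -/
def EU (D : FormRingData A) (n : ℕ) (I Γ : AddSubgroup A) : Subgroup (GLn A n) :=
  Subgroup.closure {x | ∃ g ∈ D.EUmax n, ∃ t ∈ D.transvGen n I Γ, x = g * t * g⁻¹}

/-- The additive subgroup generated by products `st`, `s ∈ S`, `t ∈ T`. -/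
def mulSub (S T : AddSubgroup A) : AddSubgroup A :=
  AddSubgroup.closure {x | ∃ a ∈ S, ∃ b ∈ T, x = a * b}

/-- The symmetrised product `ST + TS` of two (additive subgroups underlying)
two-sided ideals. -/
def symI (S T : AddSubgroup A) : AddSubgroup A :=
  mulSub S T ⊔ mulSub T S

/-- The minimal relative form parameter `Γ_min(K)` of level `K`. -/
def gammaMin (D : FormRingData A) (K : AddSubgroup A) : AddSubgroup A :=
  AddSubgroup.closure
    ({x | ∃ a ∈ K, x = a - D.lam * D.bar a} ∪
      {x | ∃ a ∈ K, ∃ c ∈ D.Lambda, x = a * c * D.bar a})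

/-- The relative form parameter `ˢΓ = ⟨ b γ b̄ ∣ b ∈ S, γ ∈ Γ ⟩`. -/
def conjPar (D : FormRingData A) (S Γ : AddSubgroup A) : AddSubgroup A :=
  AddSubgroup.closure {x | ∃ b ∈ S, ∃ g ∈ Γ, x = b * g * D.bar b}

/-- The relative form parameter of the symmetrised product
`(I,Γ)∘(J,Δ) = (IJ+JI, Γ_min(IJ+JI) + ᴶΓ + ᴵΔ)`. -/
def symG (D : FormRingData A) (I Γ J Δ : AddSubgroup A) : AddSubgroup A :=
  D.gammaMin (symI I J) ⊔ D.conjPar J Γ ⊔ D.conjPar I Δ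

/-- The elementary subgroup `EU(2n, (I,Γ)∘(J,Δ))` of the symmetrised product. -/
def EUsym (D : FormRingData A) (n : ℕ) (I Γ J Δ : AddSubgroup A) : Subgroup (GLn A n) :=
  D.EU n (symI I J) (D.symG I Γ J Δ)

/-- Position-dependent membership `a ∈ (I,Γ)` at position `(i,j)`:
`a ∈ I` for a short root position, `a ∈ λ^{−(ε(i)+1)/2}Γ` for a long one. -/
def pmem (D : FormRingData A) (I Γ : AddSubgroup A) {n : ℕ} (i j : Idx n) (a : A) : Prop :=
  if j = Idx.neg i then ∃ g ∈ Γ, a = D.lpow (-(Idx.eps i + 1) / 2) * g else a ∈ I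

end FormRingData

/-- A form ideal `(I,Γ)` of the form ring `(A,Λ)`. -/
structure FormIdeal {A : Type*} [Ring A] (D : FormRingData A) where
  I : AddSubgroup A
  Gamma : AddSubgroup A
  mul_mem_left : ∀ (c : A), ∀ x ∈ I, c * x ∈ I
  mul_mem_right : ∀ (c : A), ∀ x ∈ I, x * c ∈ I
  bar_mem : ∀ x ∈ I, D.bar x ∈ I
  gammaMin_le : D.gammaMin I ≤ Gamma
  gamma_le_I : Gamma ≤ I
  gamma_le_Lambda : Gamma ≤ D.Lambda
  gamma_conj : ∀ (c : A), ∀ x ∈ Gamma, c * x * D.bar c ∈ Gamma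

/-!
The long root element `p = T_{i,-i}(a - λ^{ε(-i)} ā)` is the commutator `[x, y]` of
`x = T_{i,k}(a)` and `y = T_{k,-i}(1)`. Put `z = T_{-i,i}(b)` and compute modulo
`EU(2n, (I,Γ)∘(J,Δ))`. There `x` and `z` commute, while `[y, z]` is `u = T_{k,i}(b)` times a long
root element commuting with `x`, `y` and `u`, so that replacing `y` by its conjugate under `z`
replaces `[x, y]` by `[x, u⁻¹ y]`, and `[p, z]` becomes `[x, u]`. This uses that `u` commutes with
`p` and with `[x, u]`. For the latter a third index `h ≠ ±i, ±k` is needed: `u` is the commutator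
of `T_{k,h}(1)` and `T_{h,i}(b)`, each of which commutes with `[x, u]`. By the same centrality,
`c ↦ [x, T_{k,i}(c)]` is additive on `J`, which splits `[x, u]` along `b = b' - λ^{ε(i)} b̄'`.
-/

section Group

variable {G : Type*} [Group G] {g r u v x y z : G}

theorem commute_commutatorElement_right (hx : Commute g x) (hy : Commute g y) :
    Commute g ⁅x, y⁆ := by
  rw [commutatorElement_def]
  exact ((hx.mul_right hy).mul_right hx.inv_right).mul_right hy.inv_right

theorem commute_commutatorElement_of_commutatorElement (hx : Commute ⁅r, x⁆ x)
    (hu : Commute ⁅r, x⁆ u) (hru : Commute r u) : Commute r ⁅x, u⁆ := by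
  refine mul_inv_eq_iff_eq_mul.mp ?_
  calc r * ⁅x, u⁆ * r⁻¹ = ⁅r * x * r⁻¹, r * u * r⁻¹⁆ := conjugate_commutatorElement ..
    _ = ⁅⁅r, x⁆ * x, u⁆ := by
        rw [hru.eq, mul_inv_cancel_right, commutatorElement_def r, inv_mul_cancel_right]
    _ = ⁅r, x⁆ * ⁅x, u⁆ * ⁅r, x⁆⁻¹ := by
        rw [commutatorElement_mul_left_eq_conj_mul, hu.commutator_eq, mul_one]
    _ = ⁅x, u⁆ := by rw [(commute_commutatorElement_right hx hu).eq, mul_inv_cancel_right]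

theorem commutatorElement_mul_right_of_commute (h : Commute u ⁅x, v⁆) :
    ⁅x, u * v⁆ = ⁅x, u⁆ * ⁅x, v⁆ := by
  rw [commutatorElement_mul_right_eq_mul_conj, mul_assoc _ u, h.eq, ← mul_assoc,
    mul_inv_cancel_right]

theorem commutatorElement_commutatorElement_eq (hxz : Commute x z) (hyz : ⁅y, z⁆ = u * v)
    (hvx : Commute v x) (hvy : Commute v y) (hvu : Commute v u) (hup : Commute u ⁅x, y⁆)
    (hu : Commute u ⁅x, u⁆) : ⁅⁅x, y⁆, z⁆ = ⁅x, u⁆ := by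
  have conj_y : z * y * z⁻¹ = v⁻¹ * (u⁻¹ * y) := by
    rw [← mul_assoc, ← _root_.mul_inv_rev, ← hyz, commutatorElement_def]
    group
  have hv : Commute v⁻¹ ⁅x, u⁻¹ * y⁆ :=
    (commute_commutatorElement_right hvx (hvu.inv_right.mul_right hvy)).inv_left
  have conj_p : z * ⁅x, y⁆ * z⁻¹ = ⁅x, u⁻¹⁆ * ⁅x, y⁆ :=
    calc z * ⁅x, y⁆ * z⁻¹ = ⁅z * x * z⁻¹, z * y * z⁻¹⁆ := conjugate_commutatorElement ..
      _ = ⁅x, v⁻¹ * (u⁻¹ * y)⁆ := by rw [← hxz.eq, mul_inv_cancel_right, conj_y]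
      _ = ⁅x, u⁻¹ * y⁆ := by
          rw [commutatorElement_mul_right_of_commute hv, hvx.symm.inv_right.commutator_eq, one_mul]
      _ = ⁅x, u⁻¹⁆ * ⁅x, y⁆ := commutatorElement_mul_right_of_commute hup.inv_left
  calc ⁅⁅x, y⁆, z⁆ = ⁅x, y⁆ * (z * ⁅x, y⁆ * z⁻¹)⁻¹ := by rw [commutatorElement_def]; group
    _ = ⁅x, u⁻¹⁆⁻¹ := by rw [conj_p, _root_.mul_inv_rev, mul_inv_cancel_left]
    _ = u⁻¹ * ⁅x, u⁆ * u := by rw [commutatorElement_inv, commutatorElement_inv_left]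
    _ = ⁅x, u⁆ := by rw [mul_assoc, ← hu.eq, inv_mul_cancel_left]

end Group

namespace Idx

variable {n : ℕ}

theorem fst_neg (i : Idx n) : (neg i).1 = i.1 := rfl

theorem eps_neg (i : Idx n) : eps (neg i) = -eps i := by
  unfold eps neg
  cases i.2 <;> simp

theorem eps_eq_one_or (i : Idx n) : eps i = 1 ∨ eps i = -1 := by
  unfold eps
  cases i.2 <;> simp

theorem fst_ne_fst_neg {i j : Idx n} (h : i.1 ≠ j.1) : i.1 ≠ (neg j).1 := h

theorem fst_neg_ne_fst_neg {i j : Idx n} (h : i.1 ≠ j.1) : (neg i).1 ≠ (neg j).1 := h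

theorem fst_ne_of_ne_of_ne_neg {i j : Idx n} (h : i ≠ j) (h' : i ≠ neg j) : i.1 ≠ j.1 := by
  intro e
  rcases Bool.eq_or_eq_not i.2 j.2 with e' | e'
  · exact h (Prod.ext e e')
  · exact h' (Prod.ext e e')

end Idx

section Ring

variable {R : Type*} [Ring R] {X Y : R}

theorem commute_one_add_one_add (hXY : X * Y = 0) (hYX : Y * X = 0) :
    Commute (1 + X) (1 + Y) :=
  (Commute.one_left _).add_left ((Commute.one_right _).add_right (hXY.trans hYX.symm))

theorem one_add_mul_one_add_of_bracket_mul_eq_zero (hX : (X * Y - Y * X) * X = 0)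
    (hY : (X * Y - Y * X) * Y = 0) :
    (1 + X) * (1 + Y) = (1 + (X * Y - Y * X)) * ((1 + Y) * (1 + X)) := by
  calc (1 + X) * (1 + Y) = (1 + Y) * (1 + X) + (X * Y - Y * X) := by noncomm_ring
    _ = (1 + Y) * (1 + X) + (X * Y - Y * X) * ((1 + Y) * (1 + X)) := by
        simp only [mul_add, mul_one, ← mul_assoc, hX, hY, zero_mul, add_zero, add_mul, one_mul]
    _ = _ := (one_add_mul _ _).symm

theorem one_add_mul_one_add_of_mul_self_eq_zero (hX : X * X = 0) (hY : Y * Y = 0)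
    (hYXY : Y * X * Y = 0) :
    (1 + X) * (1 + Y) = (1 + (X * Y - Y * X)) * (1 - X * Y * X) * ((1 + Y) * (1 + X)) := by
  have hX' (a : R) : X * (X * a) = 0 := by rw [← mul_assoc, hX, zero_mul]
  have hY' (a : R) : Y * (Y * a) = 0 := by rw [← mul_assoc, hY, zero_mul]
  have hYXY' (a : R) : Y * (X * (Y * a)) = 0 := by rw [← mul_assoc, ← mul_assoc, hYXY, zero_mul]
  rw [mul_assoc] at hYXY
  simp only [mul_add, add_mul, mul_sub, sub_mul, mul_one, one_mul, mul_assoc, hX, hY, hX', hY',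
    hYXY, hYXY', mul_zero]
  abel

end Ring

namespace FormRingData

variable {A : Type*} [Ring A] (D : FormRingData A) {n : ℕ}

theorem bar_one : D.bar 1 = 1 := by
  simpa [D.bar_bar] using (D.bar_mul (D.bar 1) 1).symm

theorem bar_lam_mul_lam : D.bar D.lam * D.lam = 1 := by
  rw [← D.lam_comm, D.lam_bar]

/-- The symmetry `λ` as a unit of `A`, which turns `lpow` into integral powers in `Aˣ`. -/
def lamUnit : Aˣ := ⟨D.lam, D.bar D.lam, D.lam_bar, D.bar_lam_mul_lam⟩

theorem lpow_eq_zpow (k : ℤ) : D.lpow k = ((D.lamUnit ^ k : Aˣ) : A) := by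
  unfold lpow
  split_ifs with hk
  · lift k to ℕ using hk
    simp [lamUnit]
  · obtain ⟨m, rfl⟩ : ∃ m : ℕ, k = -m := ⟨(-k).toNat, by omega⟩
    rw [_root_.zpow_neg, zpow_natCast, ← inv_pow]
    simp [lamUnit]

theorem lpow_zero : D.lpow 0 = 1 := by simp [lpow]

theorem lpow_one : D.lpow 1 = D.lam := by simp [lpow]

theorem lpow_neg_one : D.lpow (-1) = D.bar D.lam := by simp [lpow]

theorem lpow_add (k l : ℤ) : D.lpow (k + l) = D.lpow k * D.lpow l := by
  simp only [lpow_eq_zpow, _root_.zpow_add, Units.val_mul]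

theorem commute_lpow (k : ℤ) (a : A) : Commute a (D.lpow k) := by
  rw [lpow_eq_zpow]
  exact Commute.units_zpow_right (show Commute a D.lam from (D.lam_comm a).symm) k

theorem lpow_mul_lpow_mul (k l : ℤ) (a : A) :
    D.lpow k * (D.lpow l * a) = D.lpow (k + l) * a := by
  rw [lpow_add, mul_assoc]

theorem mul_lpow_mul (a : A) (k : ℤ) (b : A) : a * (D.lpow k * b) = D.lpow k * (a * b) := by
  rw [← mul_assoc, (D.commute_lpow k a).eq, mul_assoc]

theorem bar_lpow (k : ℤ) : D.bar (D.lpow k) = D.lpow (-k) := by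
  induction k using Int.induction_on with
  | zero => simp only [neg_zero, lpow_zero, bar_one]
  | succ m ih => rw [lpow_add, bar_mul, ih, lpow_one, neg_add_rev, lpow_add, lpow_neg_one]
  | pred m ih =>
    rw [sub_eq_add_neg, lpow_add, bar_mul, ih, lpow_neg_one, bar_bar, neg_add_rev, lpow_add,
      _root_.neg_neg 1, lpow_one]

theorem bar_lpow_mul (k : ℤ) (a : A) : D.bar (D.lpow k * a) = D.lpow (-k) * D.bar a := by
  rw [bar_mul, bar_lpow, (D.commute_lpow _ _).eq]

theorem bar_eq_of_mem_Lambda {g : A} (hg : g ∈ D.Lambda) : D.bar g = -(D.lpow (-1) * g) := by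
  conv_rhs => rw [D.lambdaMax_mem g hg]
  rw [mul_neg, _root_.neg_neg, lpow_neg_one, ← mul_assoc, bar_lam_mul_lam, one_mul]

/-- The coefficient `λ^{(ε(j)-ε(i))/2} c̄` such that `-dualCoeff i j c` is the entry of
`T_{ij}(c)` at `(-j,-i)`. -/
def dualCoeff (i j : Idx n) (c : A) : A :=
  D.lpow ((Idx.eps j - Idx.eps i) / 2) * D.bar c

theorem dualCoeff_neg (i j : Idx n) (c : A) : D.dualCoeff i j (-c) = -D.dualCoeff i j c := by
  simp only [dualCoeff, map_neg, mul_neg]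

theorem dualCoeff_mul (i j k : Idx n) (c d : A) :
    D.dualCoeff i k (c * d) = D.dualCoeff j k d * D.dualCoeff i j c := by
  simp only [dualCoeff, bar_mul, mul_assoc, D.mul_lpow_mul (D.bar d), lpow_mul_lpow_mul]
  congr 2
  rcases i.eps_eq_one_or with hi | hi <;> rcases j.eps_eq_one_or with hj | hj <;>
    rcases k.eps_eq_one_or with hk | hk <;> simp [hi, hj, hk]

theorem dualCoeff_dualCoeff (i j : Idx n) (c : A) :
    D.dualCoeff (Idx.neg j) (Idx.neg i) (D.dualCoeff i j c) = c := by
  have hexp : (Idx.eps (Idx.neg i) - Idx.eps (Idx.neg j)) / 2 +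
      -((Idx.eps j - Idx.eps i) / 2) = 0 := by
    rw [Idx.eps_neg, Idx.eps_neg]
    omega
  rw [dualCoeff, dualCoeff, bar_lpow_mul, bar_bar, lpow_mul_lpow_mul, hexp, lpow_zero, one_mul]

theorem dualCoeff_self_neg (i : Idx n) (c : A) :
    D.dualCoeff i (Idx.neg i) c = D.lpow (Idx.eps (Idx.neg i)) * D.bar c := by
  rw [dualCoeff]
  congr 2
  rw [Idx.eps_neg]
  omega

/-- The entry `λ^{-(ε(i)+1)/2} g` of a long root element at `(i,-i)`, parametrised by `g ∈ Λ`
independently of the sign of `i`. -/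
def longCoeff (i : Idx n) (g : A) : A := D.lpow (-(Idx.eps i + 1) / 2) * g

theorem longCoeff_neg (i : Idx n) (g : A) :
    D.longCoeff (Idx.neg i) g = D.lpow ((Idx.eps i - 1) / 2) * g := by
  rw [longCoeff, Idx.eps_neg]
  congr 3
  omega

theorem dualCoeff_mul_longCoeff (i j : Idx n) (c : A) {g : A} (hg : g ∈ D.Lambda) :
    D.dualCoeff i (Idx.neg j) (c * D.longCoeff j g) = -(D.longCoeff j g * D.dualCoeff i j c) := by
  rw [dualCoeff, longCoeff, bar_mul, bar_lpow_mul, D.bar_eq_of_mem_Lambda hg]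
  simp only [dualCoeff, mul_neg, neg_mul, mul_assoc, D.mul_lpow_mul g, lpow_mul_lpow_mul,
    Idx.eps_neg]
  congr 3
  rcases i.eps_eq_one_or with hi | hi <;> rcases j.eps_eq_one_or with hj | hj <;>
    simp [hi, hj]

theorem mul_longCoeff_mul_dualCoeff (i j : Idx n) (c g : A) :
    c * (D.longCoeff j g * D.dualCoeff i j c) = D.longCoeff i (c * g * D.bar c) := by
  simp only [dualCoeff, longCoeff, mul_assoc, D.mul_lpow_mul c, D.mul_lpow_mul g,
    lpow_mul_lpow_mul]
  congr 2
  rcases i.eps_eq_one_or with hi | hi <;> rcases j.eps_eq_one_or with hj | hj <;>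
    simp [hi, hj]

/-- The element `c' - λ c̄'` of `Λ`, where `c' = λ^{(ε(i)+1)/2} c`; the power of `λ` makes
`c - λ^{ε(-i)} c̄` the corresponding entry of a long root element at `(i,-i)`. -/
def minForm (i : Idx n) (c : A) : D.Lambda :=
  ⟨_, D.lambdaMin_mem (D.lpow ((Idx.eps i + 1) / 2) * c)⟩

theorem longCoeff_minForm (i : Idx n) (c : A) :
    D.longCoeff i (D.minForm i c) = c - D.lpow (Idx.eps (Idx.neg i)) * D.bar c := by
  simp only [longCoeff, minForm, bar_lpow_mul, ← D.lpow_one, mul_sub, lpow_mul_lpow_mul,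
    Idx.eps_neg]
  rcases i.eps_eq_one_or with hi | hi <;> simp [hi, lpow_zero]

/-- The element `c g c̄` of `Λ`. -/
def conjForm (c : A) (g : D.Lambda) : D.Lambda := ⟨_, D.lambda_conj c g g.2⟩

theorem transvGen_subset_EU (I Γ : AddSubgroup A) :
    D.transvGen n I Γ ⊆ D.EU n I Γ := fun t ht =>
  Subgroup.subset_closure ⟨1, one_mem _, t, ht, by simp⟩

theorem TS_mem_transvGen {I Γ : AddSubgroup A} {i j : Idx n} (hij : i.1 ≠ j.1) {c : A}
    (hc : c ∈ I) : D.TS i j c ∈ D.transvGen n I Γ :=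
  Or.inl ⟨i, j, ne_of_apply_ne Prod.fst hij, ne_of_apply_ne Prod.fst hij, c, hc, rfl⟩

theorem TL_mem_transvGen {I Γ : AddSubgroup A} (i : Idx n) {g : A} (hg : g ∈ Γ) :
    D.TL i (D.longCoeff i g) ∈ D.transvGen n I Γ :=
  Or.inr ⟨i, g, hg, rfl⟩

/-- The short root element `T_{ij}(c)` of `EU(2n,A,Λ)`; the condition `i ≠ ±j` is expressed
through the underlying absolute values. -/
def short {i j : Idx n} (hij : i.1 ≠ j.1) (c : A) : D.EUmax n :=
  ⟨D.TS i j c, Subgroup.subset_closure (D.TS_mem_transvGen hij (AddSubgroup.mem_top c))⟩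

/-- The long root element of `EU(2n,A,Λ)` at `(i,-i)` with parameter `g ∈ Λ`. -/
def long (i : Idx n) (g : D.Lambda) : D.EUmax n :=
  ⟨D.TL i (D.longCoeff i g), Subgroup.subset_closure (D.TL_mem_transvGen i g.2)⟩

theorem val_short {i j : Idx n} (hij : i.1 ≠ j.1) (c : A) :
    ((D.short hij c : GLn A n) : Matrix (Idx n) (Idx n) A) = 1 + D.Xmat i j c := by
  simp only [short, TS, ne_of_apply_ne Prod.fst hij, dite_false]

theorem val_long (i : Idx n) (g : D.Lambda) :
    ((D.long i g : GLn A n) : Matrix (Idx n) (Idx n) A) =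
      1 + single i (Idx.neg i) (D.longCoeff i g) := rfl

variable {D} in
theorem EUmax_ext {x y : D.EUmax n}
    (h : ((x : GLn A n) : Matrix (Idx n) (Idx n) A) = ((y : GLn A n) : Matrix _ _ A)) : x = y :=
  Subtype.ext (Units.ext h)

section RootMatrices

variable {i j h : Idx n}

theorem Xmat_add (i j : Idx n) (c d : A) :
    D.Xmat i j (c + d) = D.Xmat i j c + D.Xmat i j d := by
  simp only [Xmat, map_add, mul_add, single_add]
  abel

theorem Xmat_eq_Xmat_neg (i j : Idx n) (c : A) :
    D.Xmat i j c = D.Xmat (Idx.neg j) (Idx.neg i) (-D.dualCoeff i j c) := by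
  change single i j c - single (Idx.neg j) (Idx.neg i) (D.dualCoeff i j c) =
    single _ _ _ - single _ _ (D.dualCoeff (Idx.neg j) (Idx.neg i) (-D.dualCoeff i j c))
  rw [dualCoeff_neg, dualCoeff_dualCoeff, Idx.neg_neg, Idx.neg_neg, stdBasisMatrix_neg',
    stdBasisMatrix_neg']
  abel

theorem Xmat_self_neg (i : Idx n) (c : A) :
    D.Xmat i (Idx.neg i) c = single i (Idx.neg i) (D.longCoeff i (D.minForm i c)) := by
  change single _ _ _ - single (Idx.neg (Idx.neg i)) _ (D.dualCoeff i (Idx.neg i) c) = _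
  rw [dualCoeff_self_neg, longCoeff_minForm, Idx.neg_neg, sub_eq_add_neg, sub_eq_add_neg,
    single_add, stdBasisMatrix_neg']

theorem Xmat_mul_Xmat (hij : i.1 ≠ j.1) (hjh : j.1 ≠ h.1) (hih : i ≠ h) (c d : A) :
    D.Xmat i j c * D.Xmat j h d = single i h (c * d) := by
  simp [Xmat, mul_sub, sub_mul, Prod.ext_iff, Idx.fst_neg, hij, hjh,
    Idx.neg_injective.ne_iff.mpr hih]

theorem Xmat_mul_Xmat_of_row (hij : i ≠ j) (hih : i ≠ h) (hjh : j.1 ≠ h.1) (c d : A) :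
    D.Xmat i j c * D.Xmat i h d = 0 := by
  simp [Xmat, mul_sub, sub_mul, Idx.neg_ne, hij.symm,
    Idx.neg_injective.ne_iff.mpr hih, show j ≠ Idx.neg h from ne_of_apply_ne Prod.fst hjh]

theorem Xmat_mul_Xmat_of_col (hji : j ≠ i) (hhi : h ≠ i) (hjh : j.1 ≠ h.1) (c d : A) :
    D.Xmat j i c * D.Xmat h i d = 0 := by
  rw [Xmat_eq_Xmat_neg, D.Xmat_eq_Xmat_neg h]
  exact D.Xmat_mul_Xmat_of_row (Idx.neg_injective.ne hji.symm) (Idx.neg_injective.ne hhi.symm)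
    (Idx.fst_neg_ne_fst_neg hjh) _ _

theorem Xmat_mul_sub_mul (hij : i.1 ≠ j.1) (hjh : j.1 ≠ h.1) (hih : i ≠ h) (c d : A) :
    D.Xmat i j c * D.Xmat j h d - D.Xmat j h d * D.Xmat i j c = D.Xmat i h (c * d) := by
  have hrev : D.Xmat j h d * D.Xmat i j c =
      single (Idx.neg h) (Idx.neg i) (D.dualCoeff i h (c * d)) := by
    rw [D.Xmat_eq_Xmat_neg j, D.Xmat_eq_Xmat_neg i,
      D.Xmat_mul_Xmat (Idx.fst_neg_ne_fst_neg hjh.symm) (Idx.fst_neg_ne_fst_neg hij.symm)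
        (Idx.neg_injective.ne hih.symm),
      neg_mul_neg, ← dualCoeff_mul]
  rw [hrev, D.Xmat_mul_Xmat hij hjh hih]
  rfl

theorem single_neg_mul_Xmat (hij : i.1 ≠ j.1) (c d : A) :
    single i (Idx.neg i) d * D.Xmat i j c = 0 := by
  simp [Xmat, mul_sub, Idx.neg_ne, show i ≠ j from ne_of_apply_ne Prod.fst hij,
    Idx.neg_injective.ne_iff]

theorem Xmat_mul_single_neg (hij : i.1 ≠ j.1) (c d : A) :
    D.Xmat i j c * single i (Idx.neg i) d = 0 := by
  simp [Xmat, sub_mul, Idx.neg_ne, show j ≠ i from ne_of_apply_ne Prod.fst hij.symm]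

theorem Xmat_mul_single (hij : i.1 ≠ j.1) (c d : A) (l : Idx n) :
    D.Xmat i j c * single j l d = single i l (c * d) := by
  simp [Xmat, sub_mul, show Idx.neg i ≠ j from ne_of_apply_ne Prod.fst hij]

theorem single_mul_Xmat (hij : i.1 ≠ j.1) (c d : A) (l : Idx n) :
    single l (Idx.neg j) d * D.Xmat i j c = -single l (Idx.neg i) (d * D.dualCoeff i j c) := by
  simp [Xmat, dualCoeff, mul_sub, show Idx.neg j ≠ i from ne_of_apply_ne Prod.fst hij.symm]

end RootMatrices

section Relations

variable {i j h : Idx n}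

theorem short_add (hij : i.1 ≠ j.1) (c d : A) :
    D.short hij (c + d) = D.short hij c * D.short hij d := by
  apply EUmax_ext
  simp only [Subgroup.coe_mul, Units.val_mul, val_short, Xmat_add, mul_add, add_mul, mul_one,
    one_mul, D.Xmat_mul (ne_of_apply_ne Prod.fst hij), add_zero]
  abel

theorem short_eq_short_neg (hij : i.1 ≠ j.1) (c : A) :
    D.short hij c = D.short (Idx.fst_neg_ne_fst_neg hij.symm) (-D.dualCoeff i j c) := by
  apply EUmax_ext
  rw [val_short, val_short, Xmat_eq_Xmat_neg]

theorem commute_short_short_of_row (hij : i.1 ≠ j.1) (hih : i.1 ≠ h.1) (hjh : j.1 ≠ h.1)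
    (c d : A) : Commute (D.short hij c) (D.short hih d) := by
  have hij' := ne_of_apply_ne Prod.fst hij
  have hih' := ne_of_apply_ne Prod.fst hih
  apply EUmax_ext
  simp only [Subgroup.coe_mul, Units.val_mul, val_short]
  exact (commute_one_add_one_add (D.Xmat_mul_Xmat_of_row hij' hih' hjh c d)
    (D.Xmat_mul_Xmat_of_row hih' hij' hjh.symm d c)).eq

theorem commute_short_short_of_col (hji : j.1 ≠ i.1) (hhi : h.1 ≠ i.1) (hjh : j.1 ≠ h.1)
    (c d : A) : Commute (D.short hji c) (D.short hhi d) := by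
  rw [short_eq_short_neg, D.short_eq_short_neg hhi]
  exact D.commute_short_short_of_row _ _ (Idx.fst_neg_ne_fst_neg hjh) _ _

theorem commute_long_short (hij : i.1 ≠ j.1) (g : D.Lambda) (c : A) :
    Commute (D.long i g) (D.short hij c) := by
  apply EUmax_ext
  simp only [Subgroup.coe_mul, Units.val_mul, val_short, val_long]
  exact (commute_one_add_one_add (D.single_neg_mul_Xmat hij c _)
    (D.Xmat_mul_single_neg hij c _)).eq

theorem val_short_mul_short (hij : i.1 ≠ j.1) (hjh : j.1 ≠ h.1) (hih : i ≠ h) (c d : A) :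
    ((D.short hij c * D.short hjh d : GLn A n) : Matrix (Idx n) (Idx n) A) =
      (1 + D.Xmat i h (c * d)) * ((1 + D.Xmat j h d) * (1 + D.Xmat i j c)) := by
  have hbracket := D.Xmat_mul_sub_mul hij hjh hih c d
  rw [← hbracket, Units.val_mul, val_short, val_short]
  apply one_add_mul_one_add_of_bracket_mul_eq_zero <;> rw [hbracket]
  · exact D.Xmat_mul_Xmat_of_row hih (ne_of_apply_ne Prod.fst hij) hjh.symm _ _
  · exact D.Xmat_mul_Xmat_of_col hih (ne_of_apply_ne Prod.fst hjh) hij _ _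

theorem commutator_short_short (hij : i.1 ≠ j.1) (hjh : j.1 ≠ h.1) (hih : i.1 ≠ h.1) (c d : A) :
    ⁅D.short hij c, D.short hjh d⁆ = D.short hih (c * d) := by
  rw [commutatorElement_def, mul_inv_eq_iff_eq_mul, mul_inv_eq_iff_eq_mul, mul_assoc]
  apply EUmax_ext
  simp only [Subgroup.coe_mul, D.val_short_mul_short hij hjh (ne_of_apply_ne Prod.fst hih),
    Units.val_mul, val_short]

theorem commutator_short_short_neg (hij : i.1 ≠ j.1) (c d : A) :
    ⁅D.short hij c, D.short (Idx.fst_ne_fst_neg hij.symm) d⁆ = D.long i (D.minForm i (c * d)) := by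
  rw [commutatorElement_def, mul_inv_eq_iff_eq_mul, mul_inv_eq_iff_eq_mul, mul_assoc]
  apply EUmax_ext
  simp only [Subgroup.coe_mul, Units.val_mul,
    D.val_short_mul_short hij (Idx.fst_ne_fst_neg hij.symm) (Idx.neg_ne i).symm, val_short,
    val_long, Xmat_self_neg]

theorem commutator_short_long (hij : i.1 ≠ j.1) (c : A) (g : D.Lambda) :
    ⁅D.short hij c, D.long j g⁆ =
      D.short (Idx.fst_ne_fst_neg hij) (c * D.longCoeff j g) * D.long i (D.conjForm c g) := by
  set X := D.Xmat i j c with hX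
  set L := single j (Idx.neg j) (D.longCoeff j g) with hL
  have hXX : X * X = 0 := D.Xmat_mul (ne_of_apply_ne Prod.fst hij) c c
  have hLL : L * L = 0 := single_mul_single_of_ne _ _ _ _ (Idx.neg_ne j) _
  have hXL : X * L = single i (Idx.neg j) (c * D.longCoeff j g) := D.Xmat_mul_single hij _ _ _
  have hLX : L * X = -single j (Idx.neg i) (D.longCoeff j g * D.dualCoeff i j c) :=
    D.single_mul_Xmat hij _ _ _
  have hLXL : L * X * L = 0 := by
    have hij' : Idx.neg i ≠ j := ne_of_apply_ne Prod.fst hij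
    rw [hLX, neg_mul, hL, single_mul_single_of_ne _ _ _ _ hij', neg_zero]
  have hbracket : X * L - L * X = D.Xmat i (Idx.neg j) (c * D.longCoeff j g) := by
    change _ = single _ _ _ - single _ _ (D.dualCoeff i (Idx.neg j) _)
    rw [D.dualCoeff_mul_longCoeff i j c g.2, stdBasisMatrix_neg', Idx.neg_neg, hXL, hLX]
  have hXLX : X * L * X = -single i (Idx.neg i) (D.longCoeff i (D.conjForm c g)) := by
    rw [mul_assoc, hLX, mul_neg, D.Xmat_mul_single hij]
    exact congrArg (-single i (Idx.neg i) ·) (D.mul_longCoeff_mul_dualCoeff i j c g)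
  rw [commutatorElement_def, mul_inv_eq_iff_eq_mul, mul_inv_eq_iff_eq_mul, mul_assoc]
  apply EUmax_ext
  simp only [Subgroup.coe_mul, Units.val_mul, val_short, val_long]
  rw [← hX, ← hL, one_add_mul_one_add_of_mul_self_eq_zero hXX hLL hLXL, hbracket, hXLX,
    sub_neg_eq_add]

end Relations

instance normal_EU_subgroupOf (n : ℕ) (I Γ : AddSubgroup A) :
    ((D.EU n I Γ).subgroupOf (D.EUmax n)).Normal := by
  refine ⟨fun t ht g => ?_⟩
  rw [Subgroup.mem_subgroupOf] at ht ⊢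
  suffices h : D.EU n I Γ ≤ (D.EU n I Γ).comap (MulAut.conj (g : GLn A n)).toMonoidHom from h ht
  refine (Subgroup.closure_le _).mpr ?_
  rintro _ ⟨g', hg', t, ht, rfl⟩
  exact Subgroup.subset_closure ⟨g * g', mul_mem g.2 hg', t, ht, by simp [mul_assoc]⟩

/-- Reduction of `EU(2n,A,Λ)` modulo `EU(2n,I,Γ)`. -/
def modEU (n : ℕ) (I Γ : AddSubgroup A) :
    D.EUmax n →* D.EUmax n ⧸ (D.EU n I Γ).subgroupOf (D.EUmax n) :=
  QuotientGroup.mk' _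

section Congruences

variable {D} {I Γ : AddSubgroup A} {i j h k : Idx n}

theorem modEU_eq_iff {x y : D.EUmax n} :
    D.modEU n I Γ x = D.modEU n I Γ y ↔ (x * y⁻¹ : GLn A n) ∈ D.EU n I Γ := by
  rw [← mul_inv_eq_one, ← map_inv, ← map_mul]
  exact QuotientGroup.eq_one_iff _

theorem modEU_eq_one {x : D.EUmax n} (hx : (x : GLn A n) ∈ D.transvGen n I Γ) :
    D.modEU n I Γ x = 1 :=
  (QuotientGroup.eq_one_iff x).mpr (D.transvGen_subset_EU I Γ hx)

theorem modEU_short (hij : i.1 ≠ j.1) {c : A} (hc : c ∈ I) :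
    D.modEU n I Γ (D.short hij c) = 1 :=
  modEU_eq_one (D.TS_mem_transvGen hij hc)

theorem modEU_long (i : Idx n) {g : D.Lambda} (hg : (g : A) ∈ Γ) :
    D.modEU n I Γ (D.long i g) = 1 :=
  modEU_eq_one (D.TL_mem_transvGen i hg)

theorem commute_modEU_short_short (hij : i.1 ≠ j.1) (hjh : j.1 ≠ h.1) (hih : i.1 ≠ h.1) {c d : A}
    (hcd : c * d ∈ I) :
    Commute (D.modEU n I Γ (D.short hij c)) (D.modEU n I Γ (D.short hjh d)) := by
  rw [← commutatorElement_eq_one_iff_commute, ← map_commutatorElement,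
    D.commutator_short_short hij hjh hih, modEU_short hih hcd]

theorem commute_modEU_short_long (hij : i.1 ≠ j.1) {c : A} {g : D.Lambda}
    (hcg : c * D.longCoeff j g ∈ I) (hcgc : c * g * D.bar c ∈ Γ) :
    Commute (D.modEU n I Γ (D.short hij c)) (D.modEU n I Γ (D.long j g)) := by
  rw [← commutatorElement_eq_one_iff_commute, ← map_commutatorElement, commutator_short_long,
    map_mul, modEU_short _ hcg, modEU_long i hcgc, one_mul]

theorem commute_modEU_commutator_short_short (hik : i.1 ≠ k.1) (hhi : h.1 ≠ i.1)
    (hkh : k.1 ≠ h.1) {a c d : A} (hca : c * a ∈ I) (hda : d * a ∈ I) :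
    Commute (D.modEU n I Γ (D.short hik.symm c))
      ⁅D.modEU n I Γ (D.short hik a), D.modEU n I Γ (D.short hik.symm d)⁆ := by
  set π := D.modEU n I Γ
  set w := ⁅π (D.short hik a), π (D.short hik.symm d)⁆
  have hs : Commute (π (D.short hhi c)) w := by
    have hone : ⁅π (D.short hhi c), π (D.short hik a)⁆ = 1 :=
      commutatorElement_eq_one_iff_commute.mpr (commute_modEU_short_short hhi hik hkh.symm hca)
    have hcol := (D.commute_short_short_of_col hhi hik.symm hkh.symm c d).map π
    exact commute_commutatorElement_right (commutatorElement_eq_one_iff_commute.mp hone) hcol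
  have hr : Commute (π (D.short hkh 1)) w := by
    have hrx : ⁅π (D.short hkh 1), π (D.short hik a)⁆ = (π (D.short hhi.symm a))⁻¹ := by
      rw [← commutatorElement_inv, ← map_commutatorElement,
        D.commutator_short_short hik hkh hhi.symm, mul_one]
    refine commute_commutatorElement_of_commutatorElement ?_ ?_ ?_
    · rw [hrx]
      exact ((D.commute_short_short_of_row hhi.symm hik hkh.symm a a).map π).inv_left
    · rw [hrx]
      exact (commute_modEU_short_short hik.symm hhi.symm hkh hda).symm.inv_left
    · exact (D.commute_short_short_of_row hkh hik.symm hhi 1 d).map π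
  have hrs : π (D.short hik.symm c) = ⁅π (D.short hkh 1), π (D.short hhi c)⁆ := by
    rw [← map_commutatorElement, D.commutator_short_short hkh hhi hik.symm, one_mul]
  rw [hrs]
  exact (commute_commutatorElement_right hr.symm hs.symm).symm

end Congruences

section SymmetrisedProduct

variable {S T : AddSubgroup A} {s t : A}

theorem mul_mem_symI_left (hs : s ∈ S) (ht : t ∈ T) : s * t ∈ symI S T :=
  AddSubgroup.mem_sup_left (AddSubgroup.subset_closure ⟨s, hs, t, ht, rfl⟩)

theorem mul_mem_symI_right (hs : s ∈ S) (ht : t ∈ T) : t * s ∈ symI S T :=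
  AddSubgroup.mem_sup_right (AddSubgroup.subset_closure ⟨t, ht, s, hs, rfl⟩)

variable {I Γ J Δ : AddSubgroup A} {c g : A}

theorem conj_mem_symG_left (hc : c ∈ J) (hg : g ∈ Γ) : c * g * D.bar c ∈ D.symG I Γ J Δ :=
  AddSubgroup.mem_sup_left (AddSubgroup.mem_sup_right
    (AddSubgroup.subset_closure ⟨c, hc, g, hg, rfl⟩))

theorem conj_mem_symG_right (hc : c ∈ I) (hg : g ∈ Δ) : c * g * D.bar c ∈ D.symG I Γ J Δ :=
  AddSubgroup.mem_sup_right (AddSubgroup.subset_closure ⟨c, hc, g, hg, rfl⟩)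

end SymmetrisedProduct

end FormRingData

namespace FormIdeal

variable {A : Type*} [Ring A] {D : FormRingData A} {n : ℕ} {i j k : Idx n} {a c : A}
  {d g : D.Lambda}

theorem longCoeff_mem (F : FormIdeal D) (i : Idx n) {g : A} (hg : g ∈ F.Gamma) :
    D.longCoeff i g ∈ F.I :=
  F.mul_mem_left _ _ (F.gamma_le_I hg)

theorem minForm_mem (F : FormIdeal D) (i : Idx n) (hc : c ∈ F.I) :
    (D.minForm i c : A) ∈ F.Gamma :=
  F.gammaMin_le (AddSubgroup.subset_closure (Or.inl ⟨_, F.mul_mem_left _ _ hc, rfl⟩))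

theorem conjForm_mem (F : FormIdeal D) (c : A) (hg : (g : A) ∈ F.Gamma) :
    (D.conjForm c g : A) ∈ F.Gamma :=
  F.gamma_conj c g hg

theorem dualCoeff_mem (F : FormIdeal D) (i j : Idx n) (hc : c ∈ F.I) : D.dualCoeff i j c ∈ F.I :=
  F.mul_mem_left _ _ (F.bar_mem _ hc)

variable (FI FJ : FormIdeal D)

/-- Reduction of `EU(2n,A,Λ)` modulo `EU(2n,(I,Γ)∘(J,Δ))`. -/
abbrev modEUsym (n : ℕ) : D.EUmax n →* D.EUmax n ⧸ (D.EU n (FormRingData.symI FI.I FJ.I)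
    (D.symG FI.I FI.Gamma FJ.I FJ.Gamma)).subgroupOf (D.EUmax n) :=
  D.modEU n _ _

theorem commute_modEUsym_short_long_left (hij : i.1 ≠ j.1) (hc : c ∈ FI.I)
    (hg : (g : A) ∈ FJ.Gamma) :
    Commute (FI.modEUsym FJ n (D.short hij c)) (FI.modEUsym FJ n (D.long j g)) :=
  FormRingData.commute_modEU_short_long hij
    (FormRingData.mul_mem_symI_left hc (FJ.longCoeff_mem j hg)) (D.conj_mem_symG_right hc hg)

theorem commute_modEUsym_short_long_right (hij : i.1 ≠ j.1) (hc : c ∈ FJ.I)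
    (hg : (g : A) ∈ FI.Gamma) :
    Commute (FI.modEUsym FJ n (D.short hij c)) (FI.modEUsym FJ n (D.long j g)) :=
  FormRingData.commute_modEU_short_long hij
    (FormRingData.mul_mem_symI_right (FI.longCoeff_mem j hg) hc) (D.conj_mem_symG_left hc hg)

theorem commute_modEUsym_commutator_short_short (hn : 3 ≤ n) (hik : i.1 ≠ k.1) {c d : A}
    (ha : a ∈ FI.I) (hc : c ∈ FJ.I) (hd : d ∈ FJ.I) :
    Commute (FI.modEUsym FJ n (D.short hik.symm c))
      ⁅FI.modEUsym FJ n (D.short hik a), FI.modEUsym FJ n (D.short hik.symm d)⁆ := by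
  obtain ⟨h, hhi, hhk⟩ := Fin.exists_ne_and_ne_of_two_lt i.1 k.1 hn
  exact FormRingData.commute_modEU_commutator_short_short (h := (h, true)) hik hhi hhk.symm
    (FormRingData.mul_mem_symI_right ha hc) (FormRingData.mul_mem_symI_right ha hd)

theorem modEUsym_commutator_long_long (hn : 3 ≤ n) (hik : i.1 ≠ k.1) (ha : a ∈ FI.I)
    (hd : (d : A) ∈ FJ.Gamma) :
    FI.modEUsym FJ n ⁅D.long i (D.minForm i a), D.long (Idx.neg i) d⁆ =
      ⁅FI.modEUsym FJ n (D.short hik a),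
        FI.modEUsym FJ n (D.short hik.symm (D.longCoeff (Idx.neg i) d))⁆ := by
  set π := FI.modEUsym FJ n
  set x := D.short hik a with hx
  set y := D.short (Idx.fst_ne_fst_neg hik.symm) 1 with hy
  set z := D.long (Idx.neg i) d
  set u := D.short hik.symm (D.longCoeff (Idx.neg i) d) with hu
  set v := D.long k (D.conjForm 1 d)
  have hb := FJ.longCoeff_mem (Idx.neg i) hd
  have hxy : D.long i (D.minForm i a) = ⁅x, y⁆ := by
    rw [hx, hy, D.commutator_short_short_neg, mul_one]
  have hyz : ⁅y, z⁆ = u * v := by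
    rw [hy, D.commutator_short_long]
    simp only [Idx.neg_neg, one_mul, hu, v]
  have hxz : Commute (π x) (π z) := by
    rw [hx, D.short_eq_short_neg]
    exact FI.commute_modEUsym_short_long_left FJ _ (neg_mem (FI.dualCoeff_mem i k ha)) hd
  have hup : Commute (π u) ⁅π x, π y⁆ := by
    rw [← map_commutatorElement, ← hxy]
    exact FI.commute_modEUsym_short_long_right FJ _ hb (FI.minForm_mem i ha)
  have hvx : Commute (π v) (π x) :=
    (FI.commute_modEUsym_short_long_left FJ hik ha (FJ.conjForm_mem 1 hd)).symm
  rw [hxy, map_commutatorElement, map_commutatorElement]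
  exact commutatorElement_commutatorElement_eq hxz
    (by rw [← map_commutatorElement, hyz, map_mul]) hvx
    ((D.commute_long_short _ _ _).map π) ((D.commute_long_short _ _ _).map π) hup
    (FI.commute_modEUsym_commutator_short_short FJ hn hik ha hb hb)

end FormIdeal

/-- Corollary to the matching lemma: if moreover `b = b' − λ^{ε(i)} b̄'` with
`b' ∈ J`, the long root elementary commutator splits as a product of two short
root elementary commutators modulo `EU(2n,(I,Γ)∘(J,Δ))`. -/
theorem statement14 {A : Type*} [Ring A] (D : FormRingData A) (n : ℕ) (hn : 3 ≤ n)
    (FI FJ : FormIdeal D) (i k : Idx n) (hk : k ≠ i) (hk' : k ≠ Idx.neg i)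
    (a : A) (ha : a ∈ FI.I)
    (b b' : A) (hb' : b' ∈ FJ.I) (hb : b = b' - D.lpow (Idx.eps i) * D.bar b')
    (hbΔ : ∃ d ∈ FJ.Gamma, b = D.lpow ((Idx.eps i - 1) / 2) * d) :
    ⁅D.TL i (a - D.lpow (Idx.eps (Idx.neg i)) * D.bar a), D.TL (Idx.neg i) b⁆ *
        (⁅D.TS i k a, D.TS k i b'⁆ *
          ⁅D.TS i k a, D.TS k i (-(D.lpow (Idx.eps i) * D.bar b'))⁆)⁻¹ ∈
      D.EUsym n FI.I FI.Gamma FJ.I FJ.Gamma := by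
  obtain ⟨d, hd, hbd⟩ := hbΔ
  have hik : i.1 ≠ k.1 := (Idx.fst_ne_of_ne_of_ne_neg hk hk').symm
  have hb'' : -(D.lpow (Idx.eps i) * D.bar b') ∈ FJ.I :=
    neg_mem (FJ.mul_mem_left _ _ (FJ.bar_mem _ hb'))
  rw [← D.longCoeff_neg] at hbd
  have matching := FI.modEUsym_commutator_long_long FJ hn hik ha
    (d := ⟨d, FJ.gamma_le_Lambda hd⟩) hd
  rw [← hbd, hb, sub_eq_add_neg, D.short_add, map_mul, commutatorElement_mul_right_of_commute
    (FI.commute_modEUsym_commutator_short_short FJ hn hik ha hb' hb''), ← map_commutatorElement,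
    ← map_commutatorElement, ← map_mul] at matching
  rw [← D.longCoeff_minForm, hbd]
  exact FormRingData.modEU_eq_iff.mp matching
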